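/- For every η ∈ S_{L,M}, the decomposition map β_L(η) = (c(η), d(η)) lands in the product of the background space and the soliton space: c(η) ∈ S^{(b)}_{L,M} and d(η) ∈ S^{(f)}_L. -/

import Mathlib

namespace BBS

attribute [local instance] Classical.propDecidable

noncomputable section

/-- Carrier sequence with initial load `m` for box capacity `L`. -/
def carrierM (L m : ℤ) (η : ℕ → ℤ) : ℕ → ℤ
  | 0 => m
  | j + 1 => η j + max 0 (η j + carrierM L m η j - L)

/-- Carrier sequence (initial load `0`). -/
def carrier (L : ℤ) (η : ℕ → ℤ) : ℕ → ℤ := carrierM L 0 η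

/-- Time evolution `T_L`. -/
def evol (L : ℤ) (η : ℕ → ℤ) (j : ℕ) : ℤ := min (L - η j) (carrier L η j)

/-- Time evolution `T_1^m` on binary sequences. -/
def evolOne (m : ℤ) (w : ℕ → ℤ) (j : ℕ) : ℤ := min (1 - w j) (carrierM 1 m w j)

/-- Membership in `S_{L,M}`. -/
def mem_S (L M : ℤ) (η : ℕ → ℤ) : Prop :=
  (∃ N : ℕ, ∀ j, N ≤ j → η j = 0) ∧
  (∀ j, -M ≤ η j ∧ η j ≤ L + M) ∧
  η 0 ≤ 0 ∧
  (∀ j, max (-η j) (η j - L) ≤ M) ∧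
  (∃ j, max (-η j) (η j - L) = M) ∧
  (∀ i : ℕ, ∑ j ∈ Finset.range (i + 2), η j ≤ ∑ j ∈ Finset.range (i + 1), (L - η j))

/-- Auxiliary sequence for the backward carrier. -/
def backAux (L : ℤ) (η : ℕ → ℤ) (x : ℕ) : ℕ → ℤ
  | 0 => 0
  | n + 1 => η (x - n - 1) + max 0 (η (x - n - 1) + backAux L η x n - L)

/-- Backward carrier `ū` computed from the index `x`. -/
def backCarrier (L : ℤ) (η : ℕ → ℤ) (x j : ℕ) : ℤ :=
  if x ≤ j then 0 else backAux L η x (x - j)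

/-- Reverse time evolution `R_L` computed from the index `x`. -/
def revol (L : ℤ) (η : ℕ → ℤ) (x j : ℕ) : ℤ :=
  if j < x then min (L - η j) (backCarrier L η x (j + 1)) else 0

/-- The concatenated word sequence `r_K(η)`. -/
def rSeq (L M : ℕ) (K : Set ℕ) (η : ℕ → ℤ) (n : ℕ) : ℤ :=
  if (n / (L + 2 * M) ∈ K ∧ ((n % (L + 2 * M) : ℕ) : ℤ) < η (n / (L + 2 * M)) + M) ∨
      (n / (L + 2 * M) ∉ K ∧
        (L : ℤ) + 2 * M - (η (n / (L + 2 * M)) + M) ≤ ((n % (L + 2 * M) : ℕ) : ℤ))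
  then 1 else 0

/-- The concatenated word sequence `l_K(η)`. -/
def lSeq (L M : ℕ) (K : Set ℕ) (η : ℕ → ℤ) (n : ℕ) : ℤ :=
  if (n / (L + 2 * M) ∈ K ∧
        (L : ℤ) + 2 * M - (η (n / (L + 2 * M)) + M) ≤ ((n % (L + 2 * M) : ℕ) : ℤ)) ∨
      (n / (L + 2 * M) ∉ K ∧ ((n % (L + 2 * M) : ℕ) : ℤ) < η (n / (L + 2 * M)) + M)
  then 1 else 0

/-- Soliton flag sequence `a(η)`. -/
def flag (L : ℤ) (η : ℕ → ℤ) : ℕ → ℤ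
  | 0 => 0
  | j + 1 =>
    if η j + η (j + 1) < L then 0
    else if η j + η (j + 1) = L then flag L η j else 1

/-- Primed soliton flag sequence `a′(η)` (with the convention `a′_{-1} = 0`). -/
def flag' (L : ℤ) (η : ℕ → ℤ) : ℕ → ℤ
  | 0 => if η 0 + η 1 < L then 0 else if η 0 + η 1 = L then 0 else 1
  | j + 1 =>
    if η (j + 1) + η (j + 2) < L then 0
    else if η (j + 1) + η (j + 2) = L then flag' L η j else 1

/-- `I(η)`: right ends of contiguous 1-segments. -/
def Iset (L : ℤ) (η : ℕ → ℤ) : Set ℕ := {j | flag L η j = 1 ∧ flag L η (j + 1) = 0}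

/-- `I′(η)`: left ends of contiguous right-1-segments. -/
def Iset' (L : ℤ) (η : ℕ → ℤ) : Set ℕ :=
  {j | (∀ k, j = k + 1 → flag' L η k = 0) ∧ flag' L η j = 1}

def marked (L : ℤ) (η : ℕ → ℤ) (j : ℕ) : Prop := j ∈ Iset L η ∨ j + 1 ∈ Iset L η

def marked' (L : ℤ) (η : ℕ → ℤ) (j : ℕ) : Prop :=
  j ∈ Iset' L η ∨ ∃ k, j = k + 1 ∧ k ∈ Iset' L η

/-- Arc-count sequence `b̃(η)`. -/
def btilde (L M : ℕ) (η : ℕ → ℤ) (j : ℕ) : ℤ :=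
  if marked (L : ℤ) η j then 0
  else min (η j + M) ((L : ℤ) + 2 * M - (η (j + 1) + M))

/-- `b̃_{j-1}` with the convention `b̃_{-1} = 0`. -/
def bprev (L M : ℕ) (η : ℕ → ℤ) : ℕ → ℤ
  | 0 => 0
  | j + 1 => btilde L M η j

/-- Primed arc-count sequence `b̃′(η)`. -/
def btilde' (L M : ℕ) (η : ℕ → ℤ) : ℕ → ℤ
  | 0 => if marked' (L : ℤ) η 0 then 0 else η 0 + M
  | j + 1 =>
    if marked' (L : ℤ) η (j + 1) then 0
    else min (η (j + 1) + M) ((L : ℤ) + 2 * M - (η j + M))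

/-- Background sequence `c(η)`: subsequence of `b̃` on unmarked indices, lowered by `M`. -/
def bg (L M : ℕ) (η : ℕ → ℤ) (j : ℕ) : ℤ :=
  btilde L M η (Nat.nth (fun i => ¬ marked (L : ℤ) η i) j) - M

/-- Primed background sequence `c′(η)`. -/
def bg' (L M : ℕ) (η : ℕ → ℤ) (j : ℕ) : ℤ :=
  btilde' L M η (Nat.nth (fun i => ¬ marked' (L : ℤ) η i) j) - M

/-- Length of the word corresponding to box `j` in `d̃(η)`. -/
def wordLen (L M : ℕ) (η : ℕ → ℤ) (j : ℕ) : ℕ :=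
  if j ∈ Iset (L : ℤ) η then L + 2 * M
  else ((L : ℤ) + 2 * M - bprev L M η j - btilde L M η j).toNat

def wordStart (L M : ℕ) (η : ℕ → ℤ) (j : ℕ) : ℕ :=
  ∑ k ∈ Finset.range j, wordLen L M η k

/-- Raised soliton word sequence `d̃(η)`. -/
def dTilde (L M : ℕ) (η : ℕ → ℤ) (n : ℕ) : ℤ :=
  if ∃ j, wordStart L M η j ≤ n ∧ n < wordStart L M η (j + 1) ∧
      ((j ∈ Iset (L : ℤ) η ∧ ((n - wordStart L M η j : ℕ) : ℤ) < η j + M) ∨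
        (j ∉ Iset (L : ℤ) η ∧
          (L : ℤ) + 2 * M - (η j + M) - bprev L M η j ≤ ((n - wordStart L M η j : ℕ) : ℤ)))
  then 1 else 0

/-- Length of the word corresponding to box `j` in `d̃′(η)`. -/
def wordLen' (L M : ℕ) (η : ℕ → ℤ) (j : ℕ) : ℕ :=
  if j ∈ Iset' (L : ℤ) η then L + 2 * M
  else ((L : ℤ) + 2 * M - btilde' L M η j - btilde' L M η (j + 1)).toNat

def wordStart' (L M : ℕ) (η : ℕ → ℤ) (j : ℕ) : ℕ :=
  ∑ k ∈ Finset.range j, wordLen' L M η k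

/-- Primed raised soliton word sequence `d̃′(η)`. -/
def dTilde' (L M : ℕ) (η : ℕ → ℤ) (n : ℕ) : ℤ :=
  if ∃ j, wordStart' L M η j ≤ n ∧ n < wordStart' L M η (j + 1) ∧
      ((j ∈ Iset' (L : ℤ) η ∧
          (L : ℤ) + 2 * M - (η j + M) ≤ ((n - wordStart' L M η j : ℕ) : ℤ)) ∨
        (j ∉ Iset' (L : ℤ) η ∧
          ((n - wordStart' L M η j : ℕ) : ℤ) < η j + M - btilde' L M η j))
  then 1 else 0

/-- The sequence `0^{s 1}1^{t 1}0^{s 2}1^{t 2}⋯0^{s N}1^{t N}0^∞`. -/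
def runSeq (N : ℕ) (s t : ℕ → ℕ) (n : ℕ) : ℤ :=
  if ∃ m, 1 ≤ m ∧ m ≤ N ∧
      (∑ k ∈ Finset.Icc 1 (m - 1), (s k + t k)) + s m ≤ n ∧
      n < ∑ k ∈ Finset.Icc 1 m, (s k + t k)
  then 1 else 0

/-- `w = 0^{s 1}1^{t 1}⋯1^{t N}0^∞` is the (maximal) run decomposition of `w`. -/
def IsRunDecomp (N : ℕ) (s t : ℕ → ℕ) (w : ℕ → ℤ) : Prop :=
  (∀ m, 1 ≤ m → m ≤ N → 1 ≤ t m) ∧ (∀ m, 2 ≤ m → m ≤ N → 1 ≤ s m) ∧ w = runSeq N s t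

def shrinkS (M : ℕ) (s : ℕ → ℕ) (m : ℕ) : ℕ := if m = 1 then s 1 - M else s m - 2 * M

def shrinkT (M : ℕ) (t : ℕ → ℕ) (m : ℕ) : ℕ := t m - 2 * M

/-- `d` is the soliton sequence `d(η)`. -/
def IsSolitonSeq (L M : ℕ) (η : ℕ → ℤ) (d : ℕ → ℤ) : Prop :=
  ∃ N s t, IsRunDecomp N s t (dTilde L M η) ∧ d = runSeq N (shrinkS M s) (shrinkT M t)

/-- `d` is the primed soliton sequence `d′(η)`. -/
def IsSolitonSeq' (L M : ℕ) (η : ℕ → ℤ) (d : ℕ → ℤ) : Prop :=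
  ∃ N s t, IsRunDecomp N s t (dTilde' L M η) ∧ d = runSeq N (shrinkS M s) (shrinkT M t)

/-- Forward shift `Λ`. -/
def lam (c : ℕ → ℤ) : ℕ → ℤ
  | 0 => 0
  | j + 1 => c j

/-- Membership in the background space `S^{(b)}_{L,M}`. -/
def mem_Sb (L M : ℤ) (c : ℕ → ℤ) : Prop := mem_S L M c ∧ ∀ j, c j + c (j + 1) ≤ L

/-- Membership in the soliton space `S^{(f)}_L`: a binary sequence with finitely many
ones all of whose maximal runs of equal letters have length greater than `L`. -/
def mem_Sf (L : ℕ) (w : ℕ → ℤ) : Prop :=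
  (∀ n, w n = 0 ∨ w n = 1) ∧ (∃ N : ℕ, ∀ n, N ≤ n → w n = 0) ∧
  ∀ n m : ℕ, n ≤ m → (∀ j, n ≤ j → j ≤ m → w j = w n) →
    (n = 0 ∨ w (n - 1) ≠ w n) → w (m + 1) ≠ w m → L < m + 1 - n

/-- Stages of the iterative arc-pairing construction: at each stage, connect every pair
`i < j` of yet-unpaired positions with `w i = a`, `w j = b` such that every position
strictly between them is already paired. -/
def arcStage (a b : ℤ) (w : ℕ → ℤ) : ℕ → Set (ℕ × ℕ)
  | 0 => ∅
  | k + 1 => arcStage a b w k ∪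
      {p : ℕ × ℕ | p.1 < p.2 ∧ w p.1 = a ∧ w p.2 = b ∧
        (∀ q ∈ arcStage a b w k, p.1 ≠ q.1 ∧ p.1 ≠ q.2 ∧ p.2 ≠ q.1 ∧ p.2 ≠ q.2) ∧
        (∀ m, p.1 < m → m < p.2 → ∃ q ∈ arcStage a b w k, m = q.1 ∨ m = q.2)}

/-- The arc pairing: `arcPairing 1 0 w` is the 10-arc pairing of `w`, and
`arcPairing 0 1 w` is the 01-arc pairing of `w`. -/
def arcPairing (a b : ℤ) (w : ℕ → ℤ) : Set (ℕ × ℕ) := ⋃ k, arcStage a b w k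

/-- Extension of `η` to integer indices with `η_j = L` for `j < 0`. -/
def etaExt (L : ℕ) (η : ℕ → ℤ) (j : ℤ) : ℤ := if j < 0 then (L : ℤ) else η j.toNat

end

end BBS

open BBS

/-!
In `d̃(η)` the boxes of a maximal stretch of flagged boxes, together with the single unflagged box
in front of it, contribute exactly one run of `1`s. The length of that run telescopes, and the
strict inequality `η_j + η_{j+1} > L` at the left end of the stretch makes it longer than `L̃`; the
strict inequality `η_q + η_{q+1} < L` at the right end does the same for the run of `0`s that
follows. The position in `d̃(η)` at which the first run of `1`s begins is an explicit sum, which the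
carrier inequality and `η_j + η_{j+1} > L` make larger than `L + M`. Shortening the runs by `2M`
(by `M` for the first one) therefore leaves them longer than `L`.

For the background, `b̃` at an unmarked `k` is `min(η̃_k, L̃ - η̃_{k+1})`, and skipping the marked
pair `k, k + 1` can only decrease `η`, since `η_k + η_{k+1} ≥ L > η_{k+1} + η_{k+2}`.
-/

namespace BBS

open Filter

/-! ### Runs of a sequence -/

section MaxRun

variable {α : Type*} {w : ℕ → α} {a : α} {n m : ℕ}

/-- A finite maximal run of the letter `a` in the word `w`, occupying the half-open interval
`[n, m)` of positions. -/
structure IsMaxRun (w : ℕ → α) (a : α) (n m : ℕ) : Prop where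
  lt : n < m
  apply_eq : ∀ i, n ≤ i → i < m → w i = a
  apply_pred_ne : ∀ k, k + 1 = n → w k ≠ a
  apply_end_ne : w m ≠ a

lemma IsMaxRun.contains_of_const (h : IsMaxRun w a n m) {p q : ℕ}
    (hconst : ∀ i, p ≤ i → i < q → w i = a) (hpm : p < m) (hnq : n < q) : n ≤ p ∧ q ≤ m := by
  refine ⟨?_, not_lt.1 fun hmq => h.apply_end_ne (hconst m hpm.le hmq)⟩
  by_contra! hpn
  exact h.apply_pred_ne (n - 1) (by omega) (hconst (n - 1) (by omega) (by omega))

end MaxRun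

lemma mem_Sf_of_isMaxRun {L : ℕ} {w : ℕ → ℤ} (hbin : ∀ n, w n = 0 ∨ w n = 1)
    (hfin : ∃ N, ∀ n, N ≤ n → w n = 0) (hrun : ∀ a n m, IsMaxRun w a n m → L < m - n) :
    mem_Sf L w := by
  refine ⟨hbin, hfin, fun n m hnm hconst hleft hright =>
    hrun (w n) n (m + 1) ⟨by omega, ?_, ?_, ?_⟩⟩
  · exact fun i hni him => hconst i hni (by omega)
  · rintro k rfl
    simpa using hleft
  · rwa [← hconst m hnm le_rfl]

lemma exists_mem_Ico_succ {α : Type*} [LinearOrder α] {f : ℕ → α} {x : α} {p q : ℕ} (hpq : p ≤ q)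
    (hp : f p ≤ x) (hq : x < f q) : ∃ i, p ≤ i ∧ i < q ∧ f i ≤ x ∧ x < f (i + 1) := by
  induction q, hpq using Nat.le_induction with
  | base => exact absurd hq hp.not_gt
  | succ q hpq ih =>
    rcases lt_or_ge x (f q) with hlt | hge
    · obtain ⟨i, hpi, hiq, hi⟩ := ih hlt
      exact ⟨i, hpi, hiq.trans q.lt_succ_self, hi⟩
    · exact ⟨q, hpq, q.lt_succ_self, hge, hq⟩

section RunSeq

variable {N : ℕ} {s t : ℕ → ℕ} {w : ℕ → ℤ} {m n : ℕ}

/-- Total length of the first `m` blocks `0^{s 1}1^{t 1}⋯0^{s m}1^{t m}` of `runSeq N s t`. -/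
def blockEnd (s t : ℕ → ℕ) (m : ℕ) : ℕ := ∑ k ∈ Finset.Icc 1 m, (s k + t k)

@[simp]
lemma blockEnd_zero (s t : ℕ → ℕ) : blockEnd s t 0 = 0 := rfl

lemma blockEnd_succ (s t : ℕ → ℕ) (m : ℕ) :
    blockEnd s t (m + 1) = blockEnd s t m + s (m + 1) + t (m + 1) := by
  simp only [blockEnd, Finset.sum_Icc_succ_top (Nat.le_add_left 1 m), add_assoc]

lemma blockEnd_mono (s t : ℕ → ℕ) : Monotone (blockEnd s t) :=
  monotone_nat_of_le_succ fun m => by rw [blockEnd_succ]; omega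

lemma runSeq_eq_zero_or_eq_one (N : ℕ) (s t : ℕ → ℕ) (n : ℕ) :
    runSeq N s t n = 0 ∨ runSeq N s t n = 1 := by
  unfold runSeq
  split_ifs <;> simp

lemma runSeq_eq_one_iff :
    runSeq N s t n = 1 ↔ ∃ m < N, blockEnd s t m + s (m + 1) ≤ n ∧ n < blockEnd s t (m + 1) := by
  simp only [runSeq, ite_eq_left_iff, zero_ne_one, imp_false, not_not]
  constructor
  · rintro ⟨m, hm, hmN, h⟩
    obtain ⟨k, rfl⟩ := Nat.exists_eq_add_of_le' hm
    exact ⟨k, hmN, h⟩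
  · rintro ⟨m, hmN, h⟩
    exact ⟨m + 1, by omega, hmN, h⟩

lemma runSeq_eq_zero_of_blockEnd_le (hmN : m ≤ N) (hn : blockEnd s t m ≤ n)
    (hlt : m < N → n < blockEnd s t m + s (m + 1)) : runSeq N s t n = 0 := by
  refine (runSeq_eq_zero_or_eq_one N s t n).resolve_right fun h => ?_
  obtain ⟨k, hkN, hle, hkn⟩ := runSeq_eq_one_iff.1 h
  rcases lt_trichotomy k m with hkm | rfl | hmk
  · have := blockEnd_mono s t (show k + 1 ≤ m from hkm)
    omega
  · exact (hlt hkN).not_ge hle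
  · have := blockEnd_mono s t (show m + 1 ≤ k from hmk)
    have := blockEnd_succ s t m
    have := hlt (hmk.trans hkN)
    omega

lemma lt_length_of_isMaxRun_runSeq {L : ℕ} {a : ℤ} (hs : ∀ m < N, L < s (m + 1))
    (ht : ∀ m < N, L < t (m + 1)) {p q : ℕ} (h : IsMaxRun (runSeq N s t) a p q) : L < q - p := by
  have hp := h.apply_eq p le_rfl h.lt
  have hpN : p < blockEnd s t N := by
    by_contra! hle
    have hzero : ∀ i, p ≤ i → runSeq N s t i = 0 := fun i hi =>
      runSeq_eq_zero_of_blockEnd_le le_rfl (hle.trans hi) (absurd · (lt_irrefl N))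
    exact h.apply_end_ne ((hzero q h.lt.le).trans ((hzero p le_rfl).symm.trans hp))
  obtain ⟨k, -, hkN, hle, hlt⟩ := exists_mem_Ico_succ N.zero_le p.zero_le hpN
  have hend := blockEnd_succ s t k
  have hsk := hs k hkN
  have htk := ht k hkN
  rcases lt_or_ge p (blockEnd s t k + s (k + 1)) with hz | ho
  · have hzeros : ∀ i, blockEnd s t k ≤ i → i < blockEnd s t k + s (k + 1) → runSeq N s t i = 0 :=
      fun i hi hi' => runSeq_eq_zero_of_blockEnd_le hkN.le hi fun _ => hi'
    obtain rfl : a = 0 := hp.symm.trans (hzeros p hle hz)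
    have := h.contains_of_const hzeros (hle.trans_lt h.lt) hz
    omega
  · have hones : ∀ i, blockEnd s t k + s (k + 1) ≤ i → i < blockEnd s t (k + 1) →
        runSeq N s t i = 1 := fun i hi hi' => runSeq_eq_one_iff.2 ⟨k, hkN, hi, hi'⟩
    obtain rfl : a = 1 := hp.symm.trans (hones p ho hlt)
    have := h.contains_of_const hones (ho.trans_lt h.lt) hlt
    omega

lemma mem_Sf_runSeq {L : ℕ} (hs : ∀ m < N, L < s (m + 1)) (ht : ∀ m < N, L < t (m + 1)) :
    mem_Sf L (runSeq N s t) :=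
  mem_Sf_of_isMaxRun (runSeq_eq_zero_or_eq_one N s t)
    ⟨blockEnd s t N, fun _ hn =>
      runSeq_eq_zero_of_blockEnd_le le_rfl hn (absurd · (lt_irrefl N))⟩
    fun _ _ _ => lt_length_of_isMaxRun_runSeq hs ht

lemma IsRunDecomp.apply_eq_one (h : IsRunDecomp N s t w) (hm : m < N)
    (hle : blockEnd s t m + s (m + 1) ≤ n) (hlt : n < blockEnd s t (m + 1)) : w n = 1 :=
  h.2.2 ▸ runSeq_eq_one_iff.2 ⟨m, hm, hle, hlt⟩

lemma IsRunDecomp.apply_eq_zero (h : IsRunDecomp N s t w) (hm : m ≤ N) (hle : blockEnd s t m ≤ n)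
    (hlt : m < N → n < blockEnd s t m + s (m + 1)) : w n = 0 :=
  h.2.2 ▸ runSeq_eq_zero_of_blockEnd_le hm hle hlt

lemma IsRunDecomp.apply_blockEnd_succ (h : IsRunDecomp N s t w) (hm : m < N) :
    w (blockEnd s t (m + 1)) = 0 :=
  h.apply_eq_zero (m := m + 1) hm le_rfl fun hlt => by
    have : 1 ≤ s (m + 1 + 1) := h.2.1 _ (by omega) hlt
    omega

lemma IsRunDecomp.isMaxRun_one (h : IsRunDecomp N s t w) (hm : m < N) :
    IsMaxRun w 1 (blockEnd s t m + s (m + 1)) (blockEnd s t (m + 1)) where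
  lt := by
    have := h.1 (m + 1) (by omega) hm
    have := blockEnd_succ s t m
    omega
  apply_eq _ := h.apply_eq_one hm
  apply_pred_ne k hk := by
    have hs : 1 ≤ s (m + 1) := by
      rcases m with _ | m
      · rw [blockEnd_zero] at hk
        omega
      · exact h.2.1 (m + 2) (by omega) hm
    rw [h.apply_eq_zero hm.le (n := k) (by omega) fun _ => by omega]
    exact zero_ne_one
  apply_end_ne := by
    rw [h.apply_blockEnd_succ hm]
    exact zero_ne_one

lemma IsRunDecomp.isMaxRun_zero (h : IsRunDecomp N s t w) (hm : m + 1 < N) :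
    IsMaxRun w 0 (blockEnd s t (m + 1)) (blockEnd s t (m + 1) + s (m + 1 + 1)) where
  lt := by
    have := h.2.1 (m + 1 + 1) (by omega) hm
    omega
  apply_eq _ hle hlt := h.apply_eq_zero hm.le hle fun _ => hlt
  apply_pred_ne k hk := by
    have hrun := h.isMaxRun_one (m := m) (by omega)
    have := hrun.lt
    rw [hrun.apply_eq k (by omega) (by omega)]
    exact one_ne_zero
  apply_end_ne := by
    have hrun := h.isMaxRun_one hm
    rw [hrun.apply_eq _ le_rfl hrun.lt]
    exact one_ne_zero

lemma IsRunDecomp.mem_Sf_shrink {L M : ℕ} (h : IsRunDecomp N s t w)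
    (hone : ∀ n m, IsMaxRun w 1 n m → L + 2 * M < m - n)
    (hzero : ∀ n m, 0 < n → IsMaxRun w 0 n m → L + 2 * M < m - n)
    (hfirst : ∀ n, w n = 1 → L + M < n) :
    mem_Sf L (runSeq N (shrinkS M s) (shrinkT M t)) := by
  refine mem_Sf_runSeq (fun m hm => ?_) fun m hm => ?_
  · rcases m with _ | m
    · have hrun := h.isMaxRun_one hm
      have := hfirst _ (hrun.apply_eq _ le_rfl hrun.lt)
      simp only [blockEnd_zero, zero_add] at this
      simp only [shrinkS, zero_add, if_true]
      omega
    · have hpos : 0 < blockEnd s t (m + 1) :=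
        (Nat.zero_le _).trans_lt (h.isMaxRun_one (m := m) (by omega)).lt
      have := hzero _ _ hpos (h.isMaxRun_zero hm)
      simp only [shrinkS, Nat.add_eq_right, Nat.add_eq_zero_iff, one_ne_zero, and_false, if_false]
      omega
  · have := hone _ _ (h.isMaxRun_one hm)
    have := blockEnd_succ s t m
    simp only [shrinkT]
    omega

end RunSeq

/-! ### Soliton flags -/

section Flag

variable {L : ℤ} {η : ℕ → ℤ} {j : ℕ}

lemma flag_eq_zero_or_eq_one (L : ℤ) (η : ℕ → ℤ) (j : ℕ) : flag L η j = 0 ∨ flag L η j = 1 := by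
  induction j with
  | zero => exact Or.inl rfl
  | succ j ih =>
    simp only [flag]
    split_ifs <;> simp [ih]

lemma flag_succ_eq_one_iff : flag L η (j + 1) = 1 ↔
    L < η j + η (j + 1) ∨ η j + η (j + 1) = L ∧ flag L η j = 1 := by
  simp only [flag]
  split_ifs <;> omega

lemma flag_succ_eq_zero_iff : flag L η (j + 1) = 0 ↔
    η j + η (j + 1) < L ∨ η j + η (j + 1) = L ∧ flag L η j = 0 := by
  simp only [flag]
  split_ifs <;> omega

lemma exists_eq_succ_of_flag_eq_one (h : flag L η j = 1) : ∃ i, j = i + 1 :=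
  Nat.exists_eq_succ_of_ne_zero fun h0 => by simp [h0, flag] at h

lemma notMem_Iset_of_flag_eq_zero (h : flag L η j = 0) : j ∉ Iset L η :=
  fun hI => zero_ne_one (h.symm.trans hI.1)

lemma notMem_Iset_of_flag_succ_eq_one (h : flag L η (j + 1) = 1) : j ∉ Iset L η :=
  fun hI => zero_ne_one (hI.2.symm.trans h)

lemma le_add_of_flag_succ_eq_one (h : flag L η (j + 1) = 1) : L ≤ η j + η (j + 1) := by
  have := flag_succ_eq_one_iff.1 h
  omega

lemma add_le_of_flag_succ_eq_zero (h : flag L η (j + 1) = 0) : η j + η (j + 1) ≤ L := by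
  have := flag_succ_eq_zero_iff.1 h
  omega

lemma lt_add_of_flag_eq_zero_of_flag_succ_eq_one (h₀ : flag L η j = 0)
    (h₁ : flag L η (j + 1) = 1) : L < η j + η (j + 1) := by
  have := flag_succ_eq_one_iff.1 h₁
  omega

lemma add_lt_of_mem_Iset (h : j ∈ Iset L η) : η j + η (j + 1) < L := by
  have := flag_succ_eq_zero_iff.1 h.2
  have := h.1
  omega

lemma eventually_flag_eq_zero (hL : 0 < L) (hη : ∀ᶠ j in atTop, η j = 0) :
    ∀ᶠ j in atTop, flag L η j = 0 := by
  obtain ⟨N, hN⟩ := eventually_atTop.1 hη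
  refine eventually_atTop.2 ⟨N + 1, fun j hj => ?_⟩
  obtain ⟨k, rfl⟩ := Nat.exists_eq_add_of_le' (show 1 ≤ j by omega)
  refine flag_succ_eq_zero_iff.2 (Or.inl ?_)
  rwa [hN k (by omega), hN (k + 1) (by omega), add_zero]

lemma exists_first_flag_succ_eq_one (h : flag L η (j + 1) = 1) :
    ∃ k ≤ j, flag L η (k + 1) = 1 ∧ ∀ i ≤ k, flag L η i = 0 := by
  classical
  have hex : ∃ k, flag L η (k + 1) = 1 := ⟨j, h⟩
  refine ⟨Nat.find hex, Nat.find_min' hex h, Nat.find_spec hex, fun i hi => ?_⟩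
  rcases i with _ | i
  · rfl
  · exact (flag_eq_zero_or_eq_one L η (i + 1)).resolve_right (Nat.find_min hex hi)

/-- The flag of `η` equals `1` on `(j, q]` and this stretch of indices is maximal, so that
`j + 1, …, q` is a contiguous 1-segment in the sense of the paper. -/
structure IsOneSegment (L : ℤ) (η : ℕ → ℤ) (j q : ℕ) : Prop where
  lt : j < q
  flag_left : flag L η j = 0
  flag_eq_one : ∀ i, j < i → i ≤ q → flag L η i = 1
  mem_Iset : q ∈ Iset L η

lemma exists_flag_eq_zero_before (h : flag L η j = 1) :
    ∃ p < j, flag L η p = 0 ∧ ∀ i, p < i → i ≤ j → flag L η i = 1 := by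
  induction j with
  | zero => exact absurd h (by simp [flag])
  | succ j ih =>
    rcases flag_eq_zero_or_eq_one L η j with h₀ | h₁
    · refine ⟨j, j.lt_succ_self, h₀, fun i hi hi' => ?_⟩
      rwa [show i = j + 1 by omega]
    · obtain ⟨p, hpj, hp, hone⟩ := ih h₁
      refine ⟨p, by omega, hp, fun i hi hi' => ?_⟩
      rcases hi'.eq_or_lt with rfl | hlt
      · exact h
      · exact hone i hi (by omega)

lemma exists_mem_Iset_after (hflag : ∀ᶠ i in atTop, flag L η i = 0) (h : flag L η j = 1) :
    ∃ q, j ≤ q ∧ q ∈ Iset L η ∧ ∀ i, j ≤ i → i ≤ q → flag L η i = 1 := by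
  classical
  have hex : ∃ k, flag L η (j + k + 1) = 0 := by
    obtain ⟨B, hB⟩ := eventually_atTop.1 hflag
    exact ⟨B, hB _ (by omega)⟩
  have hone : ∀ i, j ≤ i → i ≤ j + Nat.find hex → flag L η i = 1 := by
    intro i hji hi
    rcases hji.eq_or_lt with rfl | hlt
    · exact h
    · have hmin := Nat.find_min hex (m := i - j - 1) (by omega)
      rw [show j + (i - j - 1) + 1 = i by omega] at hmin
      exact (flag_eq_zero_or_eq_one L η i).resolve_left hmin
  exact ⟨j + Nat.find hex, by omega, ⟨hone _ (by omega) le_rfl, Nat.find_spec hex⟩, hone⟩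

lemma exists_isOneSegment (hflag : ∀ᶠ i in atTop, flag L η i = 0) (h : flag L η j = 1) :
    ∃ p q, IsOneSegment L η p q ∧ p < j ∧ j ≤ q := by
  obtain ⟨p, hpj, hp, hleft⟩ := exists_flag_eq_zero_before h
  obtain ⟨q, hjq, hq, hright⟩ := exists_mem_Iset_after hflag h
  refine ⟨p, q, ⟨by omega, hp, fun i hpi hiq => ?_, hq⟩, hpj, hjq⟩
  rcases le_total i j with hij | hji
  · exact hleft i hpi hij
  · exact hright i hji hiq

end Flag

/-! ### The background sequence -/

section Background

/-- The `j`-th index (counted from `0`) that is not marked. -/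
noncomputable def unmarkedIndex (L : ℤ) (η : ℕ → ℤ) (j : ℕ) : ℕ :=
  Nat.nth (fun i => ¬ marked L η i) j

lemma eventually_not_marked {L : ℤ} {η : ℕ → ℤ} (hflag : ∀ᶠ j in atTop, flag L η j = 0) :
    ∀ᶠ j in atTop, ¬ marked L η j := by
  filter_upwards [hflag, (tendsto_add_atTop_nat 1).eventually hflag] with j h₀ h₁
  exact not_or.2 ⟨notMem_Iset_of_flag_eq_zero h₀, notMem_Iset_of_flag_eq_zero h₁⟩

section Index

variable {L : ℤ} {η : ℕ → ℤ} {j : ℕ}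

lemma le_of_forall_marked {k l : ℕ} (hk : k ∉ Iset L η) (hkl : k ≤ l)
    (hmarked : ∀ i, k ≤ i → i < l → marked L η i) (hl : ¬ marked L η l) : η l ≤ η k := by
  rcases hkl.eq_or_lt with rfl | hlt
  · exact le_rfl
  have hk1 : k + 1 ∈ Iset L η := (hmarked k le_rfl hlt).resolve_left hk
  have hne : k + 1 ≠ l := fun h => hl (Or.inl (h ▸ hk1))
  have hskip : η l ≤ η (k + 2) :=
    le_of_forall_marked (k := k + 2) (notMem_Iset_of_flag_eq_zero hk1.2) (by omega)
      (fun i hi hil => hmarked i (by omega) hil) hl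
  have hge : L ≤ η k + η (k + 1) := le_add_of_flag_succ_eq_one hk1.1
  have hlt' : η (k + 1) + η (k + 2) < L := add_lt_of_mem_Iset hk1
  omega
termination_by l - k

lemma marked_of_lt_unmarkedIndex_zero {k : ℕ} (hk : k < unmarkedIndex L η 0) : marked L η k := by
  rw [unmarkedIndex, Nat.nth_zero] at hk
  exact not_not.1 (Nat.notMem_of_lt_sInf hk)

lemma marked_of_lt_of_lt_unmarkedIndex_succ {k : ℕ} (hk : unmarkedIndex L η j < k)
    (hk' : k < unmarkedIndex L η (j + 1)) : marked L η k := by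
  by_contra hunmarked
  exact hk.not_ge (Nat.le_nth_of_lt_nth_succ hk' hunmarked)

variable (hinf : {i | ¬ marked L η i}.Infinite)
include hinf

lemma not_marked_unmarkedIndex (j : ℕ) : ¬ marked L η (unmarkedIndex L η j) :=
  Nat.nth_mem_of_infinite hinf j

lemma unmarkedIndex_strictMono : StrictMono (unmarkedIndex L η) :=
  Nat.nth_strictMono hinf

lemma apply_unmarkedIndex_zero_le : η (unmarkedIndex L η 0) ≤ η 0 :=
  le_of_forall_marked (notMem_Iset_of_flag_eq_zero rfl) (Nat.zero_le _)
    (fun _ _ => marked_of_lt_unmarkedIndex_zero) (not_marked_unmarkedIndex hinf 0)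

lemma apply_unmarkedIndex_succ_le (j : ℕ) :
    η (unmarkedIndex L η (j + 1)) ≤ η (unmarkedIndex L η j + 1) :=
  le_of_forall_marked (fun h => not_marked_unmarkedIndex hinf j (Or.inr h))
    (unmarkedIndex_strictMono hinf j.lt_succ_self)
    (fun _ => marked_of_lt_of_lt_unmarkedIndex_succ) (not_marked_unmarkedIndex hinf (j + 1))

end Index

variable {L M : ℕ} {η : ℕ → ℤ}

lemma btilde_of_marked {j : ℕ} (h : marked (L : ℤ) η j) : btilde L M η j = 0 := if_pos h

lemma btilde_of_not_marked {j : ℕ} (h : ¬ marked (L : ℤ) η j) :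
    btilde L M η j = min (η j) (L - η (j + 1)) + M := by
  rw [btilde, if_neg h]
  omega

lemma bg_eq_min (hinf : {i | ¬ marked (L : ℤ) η i}.Infinite) (j : ℕ) :
    bg L M η j = min (η (unmarkedIndex L η j)) (L - η (unmarkedIndex L η j + 1)) := by
  have := btilde_of_not_marked (M := M) (not_marked_unmarkedIndex hinf j)
  rw [← add_sub_cancel_right (min _ _) (M : ℤ), ← this]
  rfl

lemma bg_zero_le (hinf : {i | ¬ marked (L : ℤ) η i}.Infinite) : bg L M η 0 ≤ η 0 := by
  rw [bg_eq_min hinf]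
  exact (min_le_left _ _).trans (apply_unmarkedIndex_zero_le hinf)

lemma bg_add_bg_succ_le (hinf : {i | ¬ marked (L : ℤ) η i}.Infinite) (j : ℕ) :
    bg L M η j + bg L M η (j + 1) ≤ L := by
  rw [bg_eq_min hinf, bg_eq_min hinf]
  have := apply_unmarkedIndex_succ_le hinf j
  omega

lemma eventually_bg_eq_zero (hinf : {i | ¬ marked (L : ℤ) η i}.Infinite)
    (hfin : ∀ᶠ j in atTop, η j = 0) : ∀ᶠ j in atTop, bg L M η j = 0 := by
  have htendsto := (unmarkedIndex_strictMono hinf).tendsto_atTop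
  filter_upwards [htendsto.eventually hfin,
    ((tendsto_add_atTop_nat 1).comp htendsto).eventually hfin] with j h₀ h₁
  rw [bg_eq_min hinf, h₀, show η (unmarkedIndex L η j + 1) = 0 from h₁]
  omega

lemma not_marked_of_apply_succ_eq (hb : ∀ j, -(M : ℤ) ≤ η j ∧ η j ≤ L + M) {j : ℕ}
    (hj : η (j + 1) = L + M) : ¬ marked (L : ℤ) η j := by
  rintro (h | h)
  · have := add_lt_of_mem_Iset h
    have := hb j
    omega
  · have : η (j + 1) + η (j + 1 + 1) < L := add_lt_of_mem_Iset h
    have := hb (j + 1 + 1)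
    omega

lemma exists_apply_eq_of_marked (hb : ∀ j, -(M : ℤ) ≤ η j ∧ η j ≤ L + M) {j : ℕ}
    (hj : η j = -M) (hmarked : marked (L : ℤ) η j) : ∃ i, η i = L + M := by
  have hflag : flag (L : ℤ) η j = 1 := by
    rcases hmarked with h | h
    · exact h.1
    · have := flag_succ_eq_one_iff.1 h.1
      have := hb (j + 1)
      omega
  obtain ⟨i, rfl⟩ := exists_eq_succ_of_flag_eq_one hflag
  have := le_add_of_flag_succ_eq_one hflag
  have := hb i
  exact ⟨i, by omega⟩

lemma exists_not_marked_min_eq (hL : 1 ≤ L) (hb : ∀ j, -(M : ℤ) ≤ η j ∧ η j ≤ L + M)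
    (h0 : η 0 ≤ 0) (hmax : ∃ j, max (-η j) (η j - L) = M) :
    ∃ k, ¬ marked (L : ℤ) η k ∧ min (η k) (L - η (k + 1)) = -M := by
  have htop : (∃ i, η i = L + M) → ∃ k, ¬ marked (L : ℤ) η k ∧ min (η k) (L - η (k + 1)) = -M := by
    rintro ⟨i, hi⟩
    obtain ⟨k, rfl⟩ : ∃ k, i = k + 1 :=
      Nat.exists_eq_succ_of_ne_zero (by rintro rfl; omega)
    have := hb k
    exact ⟨k, not_marked_of_apply_succ_eq hb hi, by omega⟩
  obtain ⟨j, hj⟩ := hmax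
  rcases max_choice (-η j) (η j - L) with hbot | hcap
  · have hjM : η j = -M := by omega
    by_cases hmarked : marked (L : ℤ) η j
    · exact htop (exists_apply_eq_of_marked hb hjM hmarked)
    · have := hb (j + 1)
      exact ⟨j, hmarked, by omega⟩
  · exact htop ⟨j, by omega⟩

lemma exists_bg_eq_neg (hL : 1 ≤ L) (hinf : {i | ¬ marked (L : ℤ) η i}.Infinite)
    (hb : ∀ j, -(M : ℤ) ≤ η j ∧ η j ≤ L + M) (h0 : η 0 ≤ 0)
    (hmax : ∃ j, max (-η j) (η j - L) = M) : ∃ j, bg L M η j = -M := by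
  classical
  obtain ⟨k, hk, hmin⟩ := exists_not_marked_min_eq hL hb h0 hmax
  refine ⟨Nat.count (fun i => ¬ marked (L : ℤ) η i) k, ?_⟩
  rw [bg_eq_min hinf, unmarkedIndex, Nat.nth_count hk, hmin]

lemma sum_range_le_sum_sub_of_add_succ_le {L : ℤ} {c : ℕ → ℤ} (h0 : c 0 ≤ 0)
    (hpair : ∀ j, c j + c (j + 1) ≤ L) (i : ℕ) :
    ∑ j ∈ Finset.range (i + 2), c j ≤ ∑ j ∈ Finset.range (i + 1), (L - c j) := by
  rw [Finset.sum_range_succ']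
  refine (add_le_of_nonpos_right h0).trans (Finset.sum_le_sum fun j _ => ?_)
  have := hpair j
  omega

theorem mem_Sb_bg (hL : 1 ≤ L) (hη : mem_S L M η) : mem_Sb L M (bg L M η) := by
  obtain ⟨hfin, hb, h0, -, hmax, -⟩ := hη
  have hfin' : ∀ᶠ j in atTop, η j = 0 := eventually_atTop.2 hfin
  have hinf : {i | ¬ marked (L : ℤ) η i}.Infinite := Nat.frequently_atTop_iff_infinite.1
    (eventually_not_marked (eventually_flag_eq_zero (by omega) hfin')).frequently
  have hpair := bg_add_bg_succ_le (M := M) hinf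
  have hbg0 : bg L M η 0 ≤ 0 := (bg_zero_le hinf).trans h0
  have hbounds : ∀ j, -(M : ℤ) ≤ bg L M η j ∧ bg L M η j ≤ L + M := fun j => by
    have := hb (unmarkedIndex L η j)
    have := hb (unmarkedIndex L η j + 1)
    rw [bg_eq_min hinf]
    omega
  obtain ⟨k, hk⟩ := exists_bg_eq_neg hL hinf hb h0 hmax
  exact ⟨⟨eventually_atTop.1 (eventually_bg_eq_zero hinf hfin'), hbounds, hbg0,
    fun j => by have := hbounds j; omega, ⟨k, by omega⟩,
    sum_range_le_sum_sub_of_add_succ_le hbg0 hpair⟩, hpair⟩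

end Background

/-! ### The raised soliton word -/

section RaisedWord

variable {L M : ℕ} {η : ℕ → ℤ} {j q n : ℕ}

/-- The position in `d̃(η)` at which the `1`s of box `j` begin, for `j ∉ I(η)`. -/
noncomputable def onesStart (L M : ℕ) (η : ℕ → ℤ) (j : ℕ) : ℕ :=
  wordStart L M η j + (L + M - η j - bprev L M η j).toNat

/-- The position in `d̃(η)` just after the `1`s of box `j`, for `j ∈ I(η)`. -/
noncomputable def onesEnd (L M : ℕ) (η : ℕ → ℤ) (j : ℕ) : ℕ :=
  wordStart L M η j + (η j + M).toNat

lemma btilde_of_flag_succ_eq_one (hflag : flag (L : ℤ) η (j + 1) = 1)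
    (hI : j + 1 ∉ Iset (L : ℤ) η) : btilde L M η j = L + M - η (j + 1) := by
  have hunmarked : ¬ marked (L : ℤ) η j :=
    not_or.2 ⟨notMem_Iset_of_flag_succ_eq_one hflag, hI⟩
  have := le_add_of_flag_succ_eq_one hflag
  rw [btilde_of_not_marked hunmarked]
  omega

lemma btilde_of_flag_succ_eq_zero (hflag : flag (L : ℤ) η (j + 1) = 0)
    (hI : j ∉ Iset (L : ℤ) η) : btilde L M η j = η j + M := by
  have hunmarked : ¬ marked (L : ℤ) η j :=
    not_or.2 ⟨hI, notMem_Iset_of_flag_eq_zero hflag⟩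
  have := add_le_of_flag_succ_eq_zero hflag
  rw [btilde_of_not_marked hunmarked]
  omega

lemma bprev_of_mem_Iset (hI : j ∈ Iset (L : ℤ) η) : bprev L M η j = 0 := by
  rcases j with _ | j
  · rfl
  · exact btilde_of_marked (Or.inr hI)

lemma bprev_succ_of_mem_Iset (hI : j ∈ Iset (L : ℤ) η) : bprev L M η (j + 1) = 0 :=
  btilde_of_marked (Or.inl hI)

lemma bprev_of_flag_eq_one (hflag : flag (L : ℤ) η j = 1) (hI : j ∉ Iset (L : ℤ) η) :
    bprev L M η j = L + M - η j := by
  obtain ⟨i, rfl⟩ := exists_eq_succ_of_flag_eq_one hflag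
  exact btilde_of_flag_succ_eq_one hflag hI

lemma wordStart_succ (L M : ℕ) (η : ℕ → ℤ) (j : ℕ) :
    wordStart L M η (j + 1) = wordStart L M η j + wordLen L M η j :=
  Finset.sum_range_succ _ _

lemma wordStart_mono (L M : ℕ) (η : ℕ → ℤ) : Monotone (wordStart L M η) :=
  monotone_nat_of_le_succ fun j => by rw [wordStart_succ]; omega

lemma wordStart_le_onesStart (L M : ℕ) (η : ℕ → ℤ) (j : ℕ) :
    wordStart L M η j ≤ onesStart L M η j :=
  Nat.le_add_right _ _

lemma wordStart_le_onesEnd (L M : ℕ) (η : ℕ → ℤ) (j : ℕ) :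
    wordStart L M η j ≤ onesEnd L M η j :=
  Nat.le_add_right _ _

lemma onesStart_of_flag_eq_one (hflag : flag (L : ℤ) η j = 1) (hI : j ∉ Iset (L : ℤ) η) :
    onesStart L M η j = wordStart L M η j := by
  rw [onesStart, bprev_of_flag_eq_one hflag hI]
  simp

lemma dTilde_eq_zero_or_eq_one (L M : ℕ) (η : ℕ → ℤ) (n : ℕ) :
    dTilde L M η n = 0 ∨ dTilde L M η n = 1 := by
  unfold dTilde
  split_ifs <;> simp

lemma dTilde_eq_one_iff : dTilde L M η n = 1 ↔
    ∃ j, wordStart L M η j ≤ n ∧ n < wordStart L M η (j + 1) ∧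
      (j ∈ Iset (L : ℤ) η ∧ n < onesEnd L M η j ∨
        j ∉ Iset (L : ℤ) η ∧ onesStart L M η j ≤ n) := by
  simp only [dTilde, ite_eq_left_iff, zero_ne_one, imp_false, not_not]
  refine exists_congr fun j => and_congr_right fun hle => and_congr_right fun _ => ?_
  refine or_congr (and_congr_right fun _ => ?_) (and_congr_right fun _ => ?_)
  · rw [onesEnd]
    omega
  · rw [onesStart]
    omega

lemma dTilde_eq_one_iff_of_mem_box (hle : wordStart L M η j ≤ n)
    (hlt : n < wordStart L M η (j + 1)) : dTilde L M η n = 1 ↔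
      j ∈ Iset (L : ℤ) η ∧ n < onesEnd L M η j ∨ j ∉ Iset (L : ℤ) η ∧ onesStart L M η j ≤ n := by
  refine dTilde_eq_one_iff.trans ⟨fun ⟨i, hile, hilt, h⟩ => ?_, fun h => ⟨j, hle, hlt, h⟩⟩
  obtain rfl : i = j := by
    by_contra hij
    exact Set.disjoint_left.1 ((wordStart_mono L M η).pairwise_disjoint_on_Ico_succ hij)
      ⟨hile, hilt⟩ ⟨hle, hlt⟩
  exact h

section Bounded

variable (hb : ∀ j, -(M : ℤ) ≤ η j ∧ η j ≤ L + M)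
include hb

lemma btilde_bounds (j : ℕ) :
    0 ≤ btilde L M η j ∧ btilde L M η j ≤ η j + M ∧ btilde L M η j ≤ L + M - η (j + 1) := by
  have := hb j
  have := hb (j + 1)
  by_cases h : marked (L : ℤ) η j
  · rw [btilde_of_marked h]
    omega
  · rw [btilde_of_not_marked h]
    omega

lemma bprev_le (j : ℕ) : bprev L M η j ≤ L + M - η j := by
  rcases j with _ | j
  · exact sub_nonneg.2 (hb 0).2
  · exact (btilde_bounds hb j).2.2

lemma onesStart_cast (j : ℕ) :
    (onesStart L M η j : ℤ) = wordStart L M η j + (L + M - η j - bprev L M η j) := by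
  have := bprev_le hb j
  rw [onesStart]
  omega

lemma onesEnd_cast (j : ℕ) : (onesEnd L M η j : ℤ) = wordStart L M η j + (η j + M) := by
  have := hb j
  rw [onesEnd]
  omega

lemma wordStart_succ_of_mem (hI : j ∈ Iset (L : ℤ) η) :
    (wordStart L M η (j + 1) : ℤ) = onesEnd L M η j + (L + M - η j) := by
  rw [wordStart_succ, wordLen, if_pos hI, onesEnd_cast hb]
  push_cast
  ring

lemma wordStart_succ_of_notMem (hI : j ∉ Iset (L : ℤ) η) :
    (wordStart L M η (j + 1) : ℤ) = onesStart L M η j + (η j + M - btilde L M η j) := by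
  have := bprev_le hb j
  have := btilde_bounds hb j
  rw [wordStart_succ, wordLen, if_neg hI, onesStart_cast hb]
  omega

lemma onesEnd_le_wordStart_succ (hI : j ∈ Iset (L : ℤ) η) :
    onesEnd L M η j ≤ wordStart L M η (j + 1) := by
  have := wordStart_succ_of_mem hb hI
  have := hb j
  omega

lemma onesStart_le_wordStart_succ (hI : j ∉ Iset (L : ℤ) η) :
    onesStart L M η j ≤ wordStart L M η (j + 1) := by
  have := wordStart_succ_of_notMem hb hI
  have := btilde_bounds hb j
  omega

lemma flag_succ_eq_one_of_onesStart_lt (hI : j ∉ Iset (L : ℤ) η)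
    (hlt : onesStart L M η j < wordStart L M η (j + 1)) : flag (L : ℤ) η (j + 1) = 1 := by
  refine (flag_eq_zero_or_eq_one L η (j + 1)).resolve_left fun hflag => ?_
  have := wordStart_succ_of_notMem hb hI
  have := btilde_of_flag_succ_eq_zero (M := M) hflag hI
  omega

lemma onesStart_le_wordStart {k : ℕ} (hI : j ∉ Iset (L : ℤ) η) (hjk : j < k) :
    onesStart L M η j ≤ wordStart L M η k :=
  (onesStart_le_wordStart_succ hb hI).trans (wordStart_mono L M η hjk)

lemma onesEnd_add_lt_onesStart_succ (hI : q ∈ Iset (L : ℤ) η) :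
    onesEnd L M η q + (L + 2 * M) < onesStart L M η (q + 1) := by
  have := wordStart_succ_of_mem hb hI
  have := onesStart_cast hb (q + 1)
  have := bprev_succ_of_mem_Iset (M := M) hI
  have := add_lt_of_mem_Iset hI
  omega

lemma dTilde_eq_zero_of_onesEnd_le (hI : q ∈ Iset (L : ℤ) η) (hle : onesEnd L M η q ≤ n)
    (hlt : n < onesStart L M η (q + 1)) : dTilde L M η n = 0 := by
  have hI' : q + 1 ∉ Iset (L : ℤ) η := notMem_Iset_of_flag_eq_zero hI.2
  have hstart := wordStart_le_onesEnd L M η q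
  refine (dTilde_eq_zero_or_eq_one L M η n).resolve_right fun hn => ?_
  rcases lt_or_ge n (wordStart L M η (q + 1)) with hbox | hbox
  · rcases (dTilde_eq_one_iff_of_mem_box (hstart.trans hle) hbox).1 hn with h | h
    · exact h.2.not_ge hle
    · exact h.1 hI
  · have hbox' := hlt.trans_le (onesStart_le_wordStart_succ hb hI')
    rcases (dTilde_eq_one_iff_of_mem_box hbox hbox').1 hn with h | h
    · exact hI' h.1
    · exact hlt.not_ge h.2

lemma wordStart_add_le_onesEnd (hjq : j ≤ q) (hq : q ∈ Iset (L : ℤ) η)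
    (hflag : ∀ i, j ≤ i → i ≤ q → flag (L : ℤ) η i = 1) :
    wordStart L M η j + (η j + M + bprev L M η j) ≤ onesEnd L M η q := by
  refine Nat.decreasingInduction' (fun i hiq hji ih => ?_) hjq ?_
  · have hflag' : flag (L : ℤ) η (i + 1) = 1 := hflag (i + 1) (by omega) hiq
    have hI : i ∉ Iset (L : ℤ) η := notMem_Iset_of_flag_succ_eq_one hflag'
    have hstart := wordStart_succ_of_notMem (M := M) hb hI
    rw [onesStart_of_flag_eq_one (hflag i hji hiq.le) hI] at hstart
    have hbi := bprev_of_flag_eq_one (M := M) (hflag i hji hiq.le) hI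
    have hbi' : bprev L M η (i + 1) = btilde L M η i := rfl
    have := le_add_of_flag_succ_eq_one hflag'
    omega
  · rw [bprev_of_mem_Iset hq, onesEnd_cast hb, add_zero]

namespace IsOneSegment

lemma dTilde_eq_one (h : IsOneSegment L η j q) (hle : onesStart L M η j ≤ n)
    (hlt : n < onesEnd L M η q) : dTilde L M η n = 1 := by
  obtain ⟨i, hji, hiq, hi, hi'⟩ := exists_mem_Ico_succ (q := q + 1) (by have := h.lt; omega)
    ((wordStart_le_onesStart L M η j).trans hle)
    (hlt.trans_le (onesEnd_le_wordStart_succ hb h.mem_Iset))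
  refine (dTilde_eq_one_iff_of_mem_box hi hi').2 ?_
  rcases (Nat.le_of_lt_succ hiq).eq_or_lt with rfl | hiq
  · exact Or.inl ⟨h.mem_Iset, hlt⟩
  have hI : i ∉ Iset (L : ℤ) η :=
    notMem_Iset_of_flag_succ_eq_one (h.flag_eq_one (i + 1) (by omega) hiq)
  refine Or.inr ⟨hI, ?_⟩
  rcases hji.eq_or_lt with rfl | hji
  · exact hle
  · rwa [onesStart_of_flag_eq_one (h.flag_eq_one i hji hiq.le) hI]

lemma onesStart_add_lt_onesEnd (h : IsOneSegment L η j q) :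
    onesStart L M η j + (L + 2 * M) < onesEnd L M η q := by
  have hstart := wordStart_succ_of_notMem (M := M) hb (notMem_Iset_of_flag_eq_zero h.flag_left)
  have hend : wordStart L M η (j + 1) + (η (j + 1) + M + btilde L M η j) ≤ onesEnd L M η q :=
    wordStart_add_le_onesEnd hb h.lt h.mem_Iset fun i => h.flag_eq_one i
  have := lt_add_of_flag_eq_zero_of_flag_succ_eq_one h.flag_left
    (h.flag_eq_one (j + 1) j.lt_succ_self h.lt)
  omega

end IsOneSegment

lemma exists_isOneSegment_of_dTilde_eq_one (hflag : ∀ᶠ i in atTop, flag (L : ℤ) η i = 0)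
    (hn : dTilde L M η n = 1) :
    ∃ j q, IsOneSegment L η j q ∧ onesStart L M η j ≤ n ∧ n < onesEnd L M η q := by
  obtain ⟨i, hle, hlt, ⟨hI, hend⟩ | ⟨hI, hstart⟩⟩ := dTilde_eq_one_iff.1 hn
  · obtain ⟨j, q, h, hji, hiq⟩ := exists_isOneSegment hflag hI.1
    obtain rfl : i = q := by
      by_contra hne
      exact notMem_Iset_of_flag_succ_eq_one (h.flag_eq_one (i + 1) (by omega) (by omega)) hI
    exact ⟨j, i, h,
      (onesStart_le_wordStart hb (notMem_Iset_of_flag_eq_zero h.flag_left) hji).trans hle, hend⟩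
  · obtain ⟨j, q, h, hji, hiq⟩ :=
      exists_isOneSegment hflag (flag_succ_eq_one_of_onesStart_lt hb hI (hstart.trans_lt hlt))
    refine ⟨j, q, h, ?_,
      hlt.trans_le ((wordStart_mono L M η hiq).trans (wordStart_le_onesEnd L M η q))⟩
    rcases (Nat.le_of_lt_succ hji).eq_or_lt with rfl | hji
    · exact hstart
    · exact (onesStart_le_wordStart hb (notMem_Iset_of_flag_eq_zero h.flag_left) hji).trans hle

lemma lt_length_of_isMaxRun_one (hflag : ∀ᶠ i in atTop, flag (L : ℤ) η i = 0) {m : ℕ}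
    (h : IsMaxRun (dTilde L M η) 1 n m) : L + 2 * M < m - n := by
  obtain ⟨j, q, hseg, hle, hlt⟩ :=
    exists_isOneSegment_of_dTilde_eq_one hb hflag (h.apply_eq n le_rfl h.lt)
  have := h.contains_of_const (fun _ => hseg.dTilde_eq_one hb) (hle.trans_lt h.lt) hlt
  have := hseg.onesStart_add_lt_onesEnd (M := M) hb
  omega

lemma lt_length_of_isMaxRun_zero (hflag : ∀ᶠ i in atTop, flag (L : ℤ) η i = 0) {m : ℕ}
    (hn : 0 < n) (h : IsMaxRun (dTilde L M η) 0 n m) : L + 2 * M < m - n := by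
  obtain ⟨k, rfl⟩ := Nat.exists_eq_add_of_le' hn
  have hk : dTilde L M η k = 1 :=
    (dTilde_eq_zero_or_eq_one L M η k).resolve_left (h.apply_pred_ne k rfl)
  obtain ⟨j, q, hseg, hle, hlt⟩ := exists_isOneSegment_of_dTilde_eq_one hb hflag hk
  have hend : onesEnd L M η q ≤ k + 1 := by
    by_contra! hlt'
    exact zero_ne_one ((h.apply_eq (k + 1) le_rfl h.lt).symm.trans
      (hseg.dTilde_eq_one hb (by omega) hlt'))
  have hgap := onesEnd_add_lt_onesStart_succ hb hseg.mem_Iset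
  have := h.contains_of_const (fun _ => dTilde_eq_zero_of_onesEnd_le hb hseg.mem_Iset)
    (hend.trans_lt h.lt) (by omega)
  omega

lemma onesStart_eq_sum {k : ℕ} (hk : ∀ i ≤ k, flag (L : ℤ) η i = 0) :
    (onesStart L M η k : ℤ) =
      L + M + ∑ j ∈ Finset.range k, (L - η j) - ∑ j ∈ Finset.range (k + 1), η j := by
  induction k with
  | zero => simp [onesStart_cast hb, wordStart, bprev]
  | succ k ih =>
    have hI := notMem_Iset_of_flag_eq_zero (hk k k.le_succ)
    have hstart := wordStart_succ_of_notMem (M := M) hb hI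
    have hbk : bprev L M η (k + 1) = η k + M := btilde_of_flag_succ_eq_zero (hk (k + 1) le_rfl) hI
    have hbk' : btilde L M η k = bprev L M η (k + 1) := rfl
    rw [Finset.sum_range_succ η, Finset.sum_range_succ (fun j => (L : ℤ) - η j),
      onesStart_cast hb]
    have := ih fun i hi => hk i (by omega)
    omega

lemma lt_onesStart_of_first_flag
    (hcarrier : ∀ i, ∑ j ∈ Finset.range (i + 2), η j ≤ ∑ j ∈ Finset.range (i + 1), ((L : ℤ) - η j))
    {k : ℕ} (hk : ∀ i ≤ k, flag (L : ℤ) η i = 0) (hk1 : flag (L : ℤ) η (k + 1) = 1) :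
    L + M < onesStart L M η k := by
  have hstart := onesStart_eq_sum hb hk
  have hsum := hcarrier k
  rw [Finset.sum_range_succ η, Finset.sum_range_succ (fun j => (L : ℤ) - η j)] at hsum
  have := lt_add_of_flag_eq_zero_of_flag_succ_eq_one (hk k le_rfl) hk1
  omega

lemma lt_of_dTilde_eq_one (hflag : ∀ᶠ i in atTop, flag (L : ℤ) η i = 0)
    (hcarrier : ∀ i, ∑ j ∈ Finset.range (i + 2), η j ≤ ∑ j ∈ Finset.range (i + 1), ((L : ℤ) - η j))
    (hn : dTilde L M η n = 1) : L + M < n := by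
  obtain ⟨j, q, hseg, hle, -⟩ := exists_isOneSegment_of_dTilde_eq_one hb hflag hn
  obtain ⟨k, hkj, hk1, hk⟩ :=
    exists_first_flag_succ_eq_one (hseg.flag_eq_one (j + 1) j.lt_succ_self hseg.lt)
  have hfirst := lt_onesStart_of_first_flag (M := M) hb hcarrier hk hk1
  rcases hkj.eq_or_lt with rfl | hlt
  · omega
  · have := onesStart_le_wordStart hb (notMem_Iset_of_flag_eq_zero (hk k le_rfl)) hlt
    have := wordStart_le_onesStart L M η j
    omega

end Bounded

theorem IsSolitonSeq.mem_Sf {d : ℕ → ℤ} (hd : IsSolitonSeq L M η d) (hL : 1 ≤ L)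
    (hη : mem_S L M η) : mem_Sf L d := by
  obtain ⟨hfin, hb, -, -, -, hcarrier⟩ := hη
  obtain ⟨N, s, t, hdecomp, rfl⟩ := hd
  have hflag : ∀ᶠ i in atTop, flag (L : ℤ) η i = 0 :=
    eventually_flag_eq_zero (by omega) (eventually_atTop.2 hfin)
  exact hdecomp.mem_Sf_shrink (fun _ _ => lt_length_of_isMaxRun_one hb hflag)
    (fun _ _ => lt_length_of_isMaxRun_zero hb hflag)
    fun _ => lt_of_dTilde_eq_one hb hflag hcarrier

end RaisedWord

end BBS

/-- the decomposition map lands in the product of the background space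
and the soliton space: `c(η) ∈ S^{(b)}_{L,M}` and `d(η) ∈ S^{(f)}_L`. -/
theorem stmt_14 (L M : ℕ) (hL : 1 ≤ L) (η : ℕ → ℤ) (hη : mem_S L M η) :
    mem_Sb L M (bg L M η) ∧
    (∀ d : ℕ → ℤ, IsSolitonSeq L M η d → mem_Sf L d) :=
  ⟨mem_Sb_bg hL hη, fun _ hd => hd.mem_Sf hL hη⟩
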